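/- arXiv:2601.21195 — 2 statements merged into one kernel-verified Lean document; each statement's English description precedes it below -/
import Mathlib

section
/- Let n ≥ 1, let q ≥ 1 be real, and let x_1,…,x_n be positive reals with x_1+⋯+x_n = 1. For π ∈ S_n define Ψ(q,x)_π = q^{−inv(π)} · [∏_{k=1, k∈LRM(π)}^{n−1} κ(π_k;x)] · [∏_{k=1, k∉LRM(π)}^{n−1} ( κ(π_{p_k},…,π_k;x) − q^{−1}·κ(π_{p_k},…,π_{k−1};x) )] / ∏_{k=1}^{n−1} ( κ(w_0;x) − q^{k−n−1}·κ(π_1,…,π_{k−1};x) ). Then every factor occurring in this product formula is strictly positive (each factor κ(π_k;x), each factor κ(π_{p_k},…,π_k;x) − q^{−1}κ(π_{p_k},…,π_{k−1};x), and each denominator factor κ(w_0;x) − q^{k−n−1}κ(π_1,…,π_{k−1};x)), and moreover ∑_{π∈S_n} Ψ(q,x)_π = 1. -/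
/-!
STATEMENT 1: positivity of the factors of the stationary-distribution formula for the
q-Tsetlin library on permutations, and normalization of the formula.
-/

open scoped Classical

noncomputable section

namespace QTsetlin

variable {K : Type} [Field K]

/-- Number of inversions of a permutation (one-line notation `i ↦ π i`). -/
def invCount {n : ℕ} (π : Equiv.Perm (Fin n)) : ℕ :=
  (Finset.univ.filter fun p : Fin n × Fin n => p.1 < p.2 ∧ π p.2 < π p.1).card

/-- `κ(b; x)`: sort the tuple `b` weakly decreasingly, obtaining `(b_1 ≥ ⋯ ≥ b_k)`, and form
`∑_i x_{b_i} q^{i + b_i - k - 1}` (1-based positions and values; here values are 0-based). -/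
def kappa {n : ℕ} (q : K) (x : Fin n → K) (b : List (Fin n)) : K :=
  let s := b.insertionSort (fun a c => c ≤ a)
  ∑ i : Fin s.length, x (s.get i) * q ^ ((i : ℤ) + ((s.get i : ℕ) + 1) - s.length)

/-- `k` is the (0-based) position of a left-to-right minimum of `π`. -/
def isLRM {n : ℕ} (π : Equiv.Perm (Fin n)) (k : Fin n) : Prop :=
  ∀ i : Fin n, i < k → π k < π i

/-- `p_k`: the smallest (0-based) position `i < k` with `π_i < π_k`. -/
def pMin {n : ℕ} (π : Equiv.Perm (Fin n)) (k : Fin n) : ℕ :=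
  sInf {i : ℕ | ∃ h : i < n, (⟨i, h⟩ : Fin n) < k ∧ π ⟨i, h⟩ < π k}

/-- The tuple of values `(π_{p_k}, …, π_k)`. -/
def segTo {n : ℕ} (π : Equiv.Perm (Fin n)) (k : Fin n) : List (Fin n) :=
  ((List.finRange n).filter fun i : Fin n =>
    decide (pMin π k ≤ (i : ℕ) ∧ (i : ℕ) ≤ (k : ℕ))).map π

/-- The tuple of values `(π_{p_k}, …, π_{k-1})`. -/
def segBefore {n : ℕ} (π : Equiv.Perm (Fin n)) (k : Fin n) : List (Fin n) :=
  ((List.finRange n).filter fun i : Fin n =>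
    decide (pMin π k ≤ (i : ℕ) ∧ (i : ℕ) < (k : ℕ))).map π

/-- The tuple of values `(π_1, …, π_{k-1})` (the values at positions strictly before `k`). -/
def prefixVals {n : ℕ} (π : Equiv.Perm (Fin n)) (k : Fin n) : List (Fin n) :=
  ((List.finRange n).filter fun i : Fin n => decide (i < k)).map π

/-- The stationary distribution formula for the q-Tsetlin library on permutations.
Note `kappa q x (List.finRange n) = κ(w₀; x)`. -/
def psiFormula (n : ℕ) (q : K) (x : Fin n → K) (π : Equiv.Perm (Fin n)) : K :=
  q ^ (-(invCount π : ℤ)) *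
    ((∏ k ∈ Finset.univ.filter fun k : Fin n => (k : ℕ) + 1 < n ∧ isLRM π k,
        kappa q x [π k]) *
      (∏ k ∈ Finset.univ.filter fun k : Fin n => (k : ℕ) + 1 < n ∧ ¬ isLRM π k,
        (kappa q x (segTo π k) - q⁻¹ * kappa q x (segBefore π k)))) /
    (∏ k ∈ Finset.univ.filter fun k : Fin n => (k : ℕ) + 1 < n,
      (kappa q x (List.finRange n) - q ^ (((k : ℕ) : ℤ) - (n : ℤ)) * kappa q x (prefixVals π k)))

section Aux

variable {n : ℕ}

def ee (S : Finset (Fin n)) (b : Fin n) : ℕ :=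
  (Finset.univ.filter fun c : Fin n => c < b ∧ c ∉ S).card

def Kap (q : ℝ) (x : Fin n → ℝ) (S : Finset (Fin n)) : ℝ := ∑ b ∈ S, x b * q ^ ee S b

def ff (q : ℝ) (x : Fin n → ℝ) (S : Finset (Fin n)) (b : Fin n) : ℝ :=
  x b * q ^ ee S b + (1 - q⁻¹) * ∑ c ∈ S.filter (· < b), x c * q ^ ee S c

def Dd (q : ℝ) (x : Fin n → ℝ) (S : Finset (Fin n)) : ℝ :=
  1 - (q⁻¹) ^ (n - S.card) * Kap q x S

def pre {m : ℕ} (f : Fin m → Fin n) (k : Fin m) : Finset (Fin n) :=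
  (Finset.univ.filter (· < k)).image f

lemma sorted_sum (q : ℝ) (x : Fin n → ℝ) (s : List (Fin n)) (hs : s.Pairwise (fun a c => c < a)) :
    ∑ i : Fin s.length, x (s.get i) * q ^ ((i : ℤ) + ((s.get i : ℕ) + 1) - s.length)
    = ∑ b ∈ s.toFinset, x b * q ^ (((b : ℕ) : ℤ) + 1 - ((s.toFinset.filter (· ≤ b)).card : ℕ)) := by
  induction s with
  | nil => simp
  | cons a t ih =>
    rw [List.pairwise_cons] at hs
    have hat : a ∉ t := fun h => lt_irrefl _ (hs.1 a h)
    have hnd : t.Nodup := hs.2.imp (fun h => ne_of_gt h)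
    rw [List.toFinset_cons, Finset.sum_insert (by simpa using hat)]
    have := ih hs.2
    simp only [List.length_cons]
    rw [Fin.sum_univ_succ]
    congr 1
    · have : (insert a t.toFinset).filter (· ≤ a) = insert a t.toFinset := by
        apply Finset.filter_true_of_mem
        intro c hc
        simp only [Finset.mem_insert, List.mem_toFinset] at hc
        rcases hc with rfl | hc
        · exact le_rfl
        · exact (hs.1 c hc).le
      rw [this, Finset.card_insert_of_notMem (by simpa using hat), List.toFinset_card_of_nodup hnd]
      simp
    · have e : ∀ b ∈ t.toFinset, (insert a t.toFinset).filter (· ≤ b) = t.toFinset.filter (· ≤ b) := by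
        intro b hb
        rw [Finset.filter_insert, if_neg]
        exact not_le.2 (hs.1 b (by simpa using hb))
      have e' : ∑ b ∈ t.toFinset, x b * q ^ (((b : ℕ) : ℤ) + 1 - (((insert a t.toFinset).filter (· ≤ b)).card : ℕ))
          = ∑ b ∈ t.toFinset, x b * q ^ (((b : ℕ) : ℤ) + 1 - ((t.toFinset.filter (· ≤ b)).card : ℕ)) :=
        Finset.sum_congr rfl (fun b hb => by rw [e b hb])
      rw [e', ← this]
      apply Finset.sum_congr rfl
      intro i _
      simp
      left
      congr 1
      ring

lemma ee_card (S : Finset (Fin n)) (b : Fin n) (hb : b ∈ S) :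
    ee S b + (S.filter (· ≤ b)).card = b + 1 := by
  have : (Finset.univ.filter fun c : Fin n => c < b ∧ c ∉ S) ∪ S.filter (· ≤ b) = Finset.Iic b := by
    ext c
    simp only [Finset.mem_union, Finset.mem_filter, Finset.mem_univ, true_and, Finset.mem_Iic]
    constructor
    · rintro (h | h)
      · exact h.1.le
      · exact h.2
    · intro h
      by_cases hc : c ∈ S
      · exact Or.inr ⟨hc, h⟩
      · refine Or.inl ⟨lt_of_le_of_ne h ?_, hc⟩
        rintro rfl; exact hc hb
  rw [ee, ← Finset.card_union_of_disjoint, this, Fin.card_Iic]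
  rw [Finset.disjoint_left]
  intro c h1 h2
  simp at h1 h2
  exact h1.2 h2.1

lemma kappa_eq (q : ℝ) (x : Fin n → ℝ) (l : List (Fin n)) (hl : l.Nodup) :
    kappa q x l = Kap q x l.toFinset := by
  have hp := l.perm_insertionSort (fun a c : Fin n => c ≤ a)
  have hs : (l.insertionSort (fun a c : Fin n => c ≤ a)).Pairwise (fun a c => c < a) := by
    have h1 := List.pairwise_insertionSort (fun a c : Fin n => c ≤ a) l
    have h2 : (l.insertionSort (fun a c : Fin n => c ≤ a)).Nodup := hp.nodup_iff.2 hl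
    exact (h1.and h2).imp (fun h => lt_of_le_of_ne h.1 (Ne.symm h.2))
  have := sorted_sum q x _ hs
  unfold kappa
  simp only
  rw [this, List.toFinset_eq_of_perm _ _ hp, Kap]
  apply Finset.sum_congr rfl
  intro b hb
  have := ee_card _ b hb
  rw [← zpow_natCast]
  congr 2
  omega

lemma ee_insert_le (S : Finset (Fin n)) (b c : Fin n) (h : c ≤ b) :
    ee (insert b S) c = ee S c := by
  unfold ee
  congr 1
  ext d
  simp only [Finset.mem_filter, Finset.mem_univ, true_and, Finset.mem_insert, not_or]
  constructor
  · rintro ⟨h1, h2, h3⟩; exact ⟨h1, h3⟩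
  · rintro ⟨h1, h3⟩; exact ⟨h1, (h1.trans_le h).ne, h3⟩

lemma ee_insert_gt (S : Finset (Fin n)) (b c : Fin n) (hb : b ∉ S) (h : b < c) :
    ee S c = ee (insert b S) c + 1 := by
  unfold ee
  have : (Finset.univ.filter fun d : Fin n => d < c ∧ d ∉ S) =
    insert b (Finset.univ.filter fun d : Fin n => d < c ∧ d ∉ insert b S) := by
    ext d
    simp only [Finset.mem_filter, Finset.mem_univ, true_and, Finset.mem_insert, not_or]
    by_cases hd : d = b
    · subst hd; simp [h, hb]
    · simp [hd]
  rw [this, Finset.card_insert_of_notMem]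
  simp

lemma Kap_insert (q : ℝ) (hq : 1 ≤ q) (x : Fin n → ℝ) (S : Finset (Fin n)) (b : Fin n) (hb : b ∉ S) :
    Kap q x (insert b S) - q⁻¹ * Kap q x S = ff q x S b := by
  have hq0 : q ≠ 0 := by positivity
  unfold Kap ff
  rw [Finset.sum_insert hb, ee_insert_le _ _ _ le_rfl, Finset.mul_sum, Finset.mul_sum, add_sub_assoc,
    ← Finset.sum_sub_distrib, Finset.sum_filter]
  congr 1
  apply Finset.sum_congr rfl
  intro c hc
  split_ifs with h
  · rw [ee_insert_le _ _ _ h.le]; ring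
  · have : b < c := lt_of_le_of_ne (not_lt.1 h) (by rintro rfl; exact hb hc)
    rw [ee_insert_gt S b c hb this, pow_succ]
    field_simp
    ring

lemma ee_congr {S U : Finset (Fin n)} {b c : Fin n} (hSU : S ⊆ U) (h : ∀ c ∈ U, c < b → c ∈ S)
    (hc : c ≤ b) : ee S c = ee U c := by
  unfold ee
  congr 1
  ext d
  simp only [Finset.mem_filter, Finset.mem_univ, true_and]
  constructor
  · rintro ⟨h1, h2⟩; exact ⟨h1, fun h3 => h2 (h d h3 (h1.trans_le hc))⟩
  · rintro ⟨h1, h2⟩; exact ⟨h1, fun h3 => h2 (hSU h3)⟩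

lemma ff_congr (q : ℝ) (x : Fin n → ℝ) {S U : Finset (Fin n)} {b : Fin n} (hSU : S ⊆ U)
    (h : ∀ c ∈ U, c < b → c ∈ S) : ff q x S b = ff q x U b := by
  unfold ff
  have : S.filter (· < b) = U.filter (· < b) := by
    ext c
    simp only [Finset.mem_filter]
    exact ⟨fun h1 => ⟨hSU h1.1, h1.2⟩, fun h1 => ⟨h c h1.1 h1.2, h1.2⟩⟩
  rw [this, ee_congr hSU h le_rfl]
  congr 2
  apply Finset.sum_congr rfl
  intro c hc
  rw [ee_congr hSU h (Finset.mem_filter.1 hc).2.le]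

lemma ff_pos (q : ℝ) (hq : 1 ≤ q) (x : Fin n → ℝ) (hx : ∀ i, 0 < x i) (S : Finset (Fin n))
    (b : Fin n) : 0 < ff q x S b := by
  unfold ff
  have h1 : 0 ≤ 1 - q⁻¹ := sub_nonneg.2 (inv_le_one_of_one_le₀ hq)
  have h2 : 0 ≤ ∑ c ∈ S.filter (· < b), x c * q ^ ee S c :=
    Finset.sum_nonneg fun c _ => by have := hx c; positivity
  have := hx b
  positivity

lemma geom_aux (r : ℝ) (c : Fin n) (T : Finset (Fin n)) : c ∉ T →
    ∑ b ∈ T.filter (c < ·), (1 - r) * r ^ (T.filter (· < b)).card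
      = r ^ (T.filter (· < c)).card - r ^ T.card := by
  induction T using Finset.induction_on_max with
  | empty => simp
  | insert a T ha ih =>
    intro hc
    simp only [Finset.mem_insert, not_or] at hc
    have haT : a ∉ T := fun h => lt_irrefl _ (ha a h)
    have e : ∀ b ∈ T, (insert a T).filter (· < b) = T.filter (· < b) := by
      intro b hb
      rw [Finset.filter_insert, if_neg (not_lt.2 (ha b hb).le)]
    have e2 : ∑ b ∈ T.filter (c < ·), (1 - r) * r ^ ((insert a T).filter (· < b)).card
        = r ^ (T.filter (· < c)).card - r ^ T.card := by
      rw [← ih hc.2]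
      apply Finset.sum_congr rfl
      intro b hb
      rw [e b (Finset.mem_filter.1 hb).1]
    rw [Finset.filter_insert (c < ·), Finset.card_insert_of_notMem haT]
    rcases lt_or_gt_of_ne hc.1 with h | h
    · rw [if_pos h, Finset.sum_insert (by simp [haT]), e2]
      have e3 : (insert a T).filter (· < a) = T := by
        rw [Finset.filter_insert, if_neg (lt_irrefl _), Finset.filter_true_of_mem ha]
      rw [e3, Finset.filter_insert, if_neg (not_lt.2 h.le)]
      ring
    · rw [if_neg (not_lt.2 h.le)]
      have e3 : (insert a T).filter (· < c) = insert a T := by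
        apply Finset.filter_true_of_mem
        intro d hd
        rcases Finset.mem_insert.1 hd with rfl | hd
        · exact h
        · exact (ha d hd).trans h
      have e4 : T.filter (c < ·) = ∅ := by
        apply Finset.filter_false_of_mem
        intro d hd
        exact not_lt.2 ((ha d hd).trans h).le
      rw [e3, e4, Finset.card_insert_of_notMem haT]
      simp

lemma ee_compl (S : Finset (Fin n)) (b : Fin n) : ee S b = (Sᶜ.filter (· < b)).card := by
  unfold ee
  congr 1
  ext d
  simp [and_comm]

lemma sum_ff (q : ℝ) (hq : 1 ≤ q) (x : Fin n → ℝ) (hx1 : ∑ i, x i = 1) (S : Finset (Fin n)) :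
    ∑ b ∈ Sᶜ, q⁻¹ ^ ee S b * ff q x S b = Dd q x S := by
  have hq0 : q ≠ 0 := by positivity
  have hz : ∀ k : ℕ, q⁻¹ ^ k * q ^ k = 1 := fun k => by
    rw [← mul_pow, inv_mul_cancel₀ hq0, one_pow]
  have h1 : ∀ b, q⁻¹ ^ ee S b * ff q x S b = x b +
      ∑ c ∈ S, if c < b then x c * q ^ ee S c * ((1 - q⁻¹) * q⁻¹ ^ ee S b) else 0 := by
    intro b
    unfold ff
    rw [mul_add, mul_left_comm, hz, mul_one, Finset.mul_sum, Finset.mul_sum, Finset.sum_filter]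
    congr 1
    apply Finset.sum_congr rfl
    intro c _
    split_ifs <;> ring
  rw [Finset.sum_congr rfl (fun b _ => h1 b), Finset.sum_add_distrib, Finset.sum_comm]
  have h2 : ∀ c ∈ S, (∑ b ∈ Sᶜ, if c < b then x c * q ^ ee S c * ((1 - q⁻¹) * q⁻¹ ^ ee S b) else 0)
      = x c - q⁻¹ ^ (n - S.card) * (x c * q ^ ee S c) := by
    intro c hc
    rw [← Finset.sum_filter, ← Finset.mul_sum]
    have := geom_aux q⁻¹ c Sᶜ (by simpa using hc)
    simp only [← ee_compl] at this
    rw [this, Finset.card_compl, Fintype.card_fin, mul_sub, mul_assoc, mul_comm (q ^ _), hz]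
    ring
  rw [Finset.sum_congr rfl h2, Finset.sum_sub_distrib, ← Finset.mul_sum, Dd, Kap, ← hx1,
    ← Finset.sum_add_sum_compl S x]
  ring

lemma Dd_pos (q : ℝ) (hq : 1 ≤ q) (x : Fin n → ℝ) (hx : ∀ i, 0 < x i) (hx1 : ∑ i, x i = 1)
    (S : Finset (Fin n)) (hS : S.card < n) : 0 < Dd q x S := by
  rw [← sum_ff q hq x hx1]
  apply Finset.sum_pos
  · intro b _
    have := ff_pos q hq x hx S b
    positivity
  · rw [← Finset.card_pos, Finset.card_compl, Fintype.card_fin]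
    omega

lemma pre_card {m : ℕ} (f : Fin m → Fin n) (hf : Function.Injective f) (k : Fin m) :
    (pre f k).card = k := by
  unfold pre
  rw [Finset.card_image_of_injective _ hf]
  have : Finset.univ.filter (· < k) = Finset.Iio k := by ext; simp
  rw [this, Fin.card_Iio]

lemma sum_inj (w : Finset (Fin n) → Fin n → ℝ)
    (hw : ∀ S : Finset (Fin n), S.card < n → ∑ b ∈ Sᶜ, w S b = 1) (m : ℕ) (hm : m ≤ n) :
    ∑ f : Fin m → Fin n, (if Function.Injective f then ∏ k, w (pre f k) (f k) else 0) = 1 := by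
  induction m with
  | zero => simp [Function.injective_of_subsingleton]
  | succ m ih =>
    rw [← (Fin.snocEquiv (fun _ : Fin (m+1) => Fin n)).sum_comp, Fintype.sum_prod_type_right,
      ← ih (by omega)]
    apply Finset.sum_congr rfl
    intro g _
    have hs : ∀ b, (Fin.snocEquiv (fun _ : Fin (m+1) => Fin n)) (b, g)
        = (Fin.snoc (α := fun _ => Fin n) g b : Fin (m+1) → Fin n) := fun b => rfl
    simp only [hs, Fin.snoc_injective_iff]
    by_cases hg : Function.Injective g
    · simp only [hg, true_and, if_true]
      have e1 : ∀ b : Fin n, ∀ k : Fin m,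
          pre (Fin.snoc (α := fun _ => Fin n) g b : Fin (m+1) → Fin n) k.castSucc = pre g k := by
        intro b k
        ext c
        simp only [pre, Finset.mem_image, Finset.mem_filter, Finset.mem_univ, true_and]
        constructor
        · rintro ⟨i, hi, rfl⟩
          have : (i : ℕ) < m := by have := k.2; have : (i:ℕ) < k := hi; omega
          refine ⟨i.castLT this, hi, ?_⟩
          conv_rhs => rw [← Fin.castSucc_castLT i this, Fin.snoc_castSucc]
        · rintro ⟨i, hi, rfl⟩
          exact ⟨i.castSucc, hi, by simp⟩
      have e2 : ∀ b : Fin n,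
          pre (Fin.snoc (α := fun _ => Fin n) g b : Fin (m+1) → Fin n) (Fin.last m)
            = Finset.univ.image g := by
        intro b
        ext c
        simp only [pre, Finset.mem_image, Finset.mem_filter, Finset.mem_univ, true_and]
        constructor
        · rintro ⟨i, hi, rfl⟩
          refine ⟨i.castLT hi, ?_⟩
          conv_rhs => rw [← Fin.castSucc_castLT i hi, Fin.snoc_castSucc]
        · rintro ⟨i, rfl⟩
          exact ⟨i.castSucc, Fin.castSucc_lt_last i, by simp⟩
      simp only [Fin.prod_univ_castSucc, e1, e2, Fin.snoc_castSucc, Fin.snoc_last]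
      have := hw (Finset.univ.image g) (by
        rw [Finset.card_image_of_injective _ hg, Finset.card_univ, Fintype.card_fin]; omega)
      rw [← Finset.sum_filter, ← Finset.mul_sum]
      have e3 : (Finset.univ.filter fun b => b ∉ Set.range g) = (Finset.univ.image g)ᶜ := by
        ext c; simp
      rw [e3, this, mul_one]
    · simp [hg]

lemma sum_perm (w : Finset (Fin n) → Fin n → ℝ)
    (hw : ∀ S : Finset (Fin n), S.card < n → ∑ b ∈ Sᶜ, w S b = 1) :
    ∑ π : Equiv.Perm (Fin n), ∏ k, w (pre π k) (π k) = 1 := by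
  rw [← sum_inj w hw n le_rfl, ← Finset.sum_filter]
  refine Finset.sum_bij (fun π _ => (π : Fin n → Fin n)) ?_ ?_ ?_ ?_
  · intro π _; simp [π.injective]
  · intro a _ b _ h; exact DFunLike.coe_injective h
  · intro f hf
    have hf : Function.Injective f := by simpa using hf
    exact ⟨Equiv.ofBijective f (Finite.injective_iff_bijective.1 hf), Finset.mem_univ _, rfl⟩
  · intro π _; rfl

lemma inv_eq (π : Equiv.Perm (Fin n)) : invCount π = ∑ k, ee (pre π k) (π k) := by
  unfold invCount
  rw [Finset.card_filter, Fintype.sum_prod_type]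
  apply Finset.sum_congr rfl
  intro k _
  rw [← Finset.card_filter]
  unfold ee
  rw [← Finset.card_map π.toEmbedding]
  congr 1
  ext c
  simp only [Finset.mem_map, Finset.mem_filter, Finset.mem_univ, true_and, pre, Finset.mem_image,
    Equiv.coe_toEmbedding]
  constructor
  · rintro ⟨j, ⟨h1, h2⟩, rfl⟩
    refine ⟨h2, ?_⟩
    rintro ⟨i, hi, h⟩
    rw [π.injective h] at hi
    exact lt_asymm hi h1
  · rintro ⟨h1, h2⟩
    refine ⟨π.symm c, ⟨?_, by simpa using h1⟩, by simp⟩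
    by_contra h
    apply h2
    refine ⟨π.symm c, lt_of_le_of_ne (not_lt.1 h) ?_, by simp⟩
    rintro rfl
    simp at h1

lemma seg_nodup (π : Equiv.Perm (Fin n)) (P : Fin n → Bool) :
    (((List.finRange n).filter P).map π).Nodup :=
  ((List.nodup_finRange n).filter _).map π.injective

lemma factor_lrm (q : ℝ) (hq : 1 ≤ q) (x : Fin n → ℝ) (π : Equiv.Perm (Fin n)) (k : Fin n)
    (h : isLRM π k) : kappa q x [π k] = ff q x (pre π k) (π k) := by
  rw [kappa_eq q x _ (by simp)]
  have := Kap_insert q hq x ∅ (π k) (by simp)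
  rw [← ff_congr q x (Finset.empty_subset _) (S := ∅), ← this]
  · simp [Kap]
  · intro c hc hlt
    simp only [pre, Finset.mem_image, Finset.mem_filter, Finset.mem_univ, true_and] at hc
    obtain ⟨i, hi, rfl⟩ := hc
    exact absurd (h i hi) (lt_asymm hlt)

lemma factor_not (q : ℝ) (hq : 1 ≤ q) (x : Fin n → ℝ) (π : Equiv.Perm (Fin n)) (k : Fin n)
    (h : ¬ isLRM π k) : kappa q x (segTo π k) - q⁻¹ * kappa q x (segBefore π k)
      = ff q x (pre π k) (π k) := by
  have hp : pMin π k < (k : ℕ) := by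
    have : ({i : ℕ | ∃ h : i < n, (⟨i, h⟩ : Fin n) < k ∧ π ⟨i, h⟩ < π k}).Nonempty := by
      unfold isLRM at h
      push Not at h
      obtain ⟨i, hi, h⟩ := h
      exact ⟨i, i.2, hi, lt_of_le_of_ne h (fun e => hi.ne (π.injective e))⟩
    obtain ⟨_, h1, _⟩ := Nat.sInf_mem this
    exact h1
  have e : (segTo π k).toFinset = insert (π k) (segBefore π k).toFinset := by
    ext c
    simp only [segTo, segBefore, List.mem_toFinset, List.mem_map, List.mem_filter,
      List.mem_finRange, true_and, decide_eq_true_eq, Finset.mem_insert]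
    constructor
    · rintro ⟨i, ⟨h1, h2⟩, rfl⟩
      rcases h2.lt_or_eq with h3 | h3
      · exact Or.inr ⟨i, ⟨h1, h3⟩, rfl⟩
      · rw [Fin.ext h3]; exact Or.inl rfl
    · rintro (rfl | ⟨i, ⟨h1, h2⟩, rfl⟩)
      · exact ⟨k, ⟨hp.le, le_rfl⟩, rfl⟩
      · exact ⟨i, ⟨h1, h2.le⟩, rfl⟩
  rw [kappa_eq q x (segTo π k) (seg_nodup _ _), kappa_eq q x (segBefore π k) (seg_nodup _ _), e, Kap_insert q hq]
  · apply ff_congr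
    · intro c
      simp only [segBefore, List.mem_toFinset, List.mem_map, List.mem_filter, pre,
        List.mem_finRange, true_and, decide_eq_true_eq, Finset.mem_image, Finset.mem_filter,
        Finset.mem_univ]
      rintro ⟨i, ⟨h1, h2⟩, rfl⟩
      exact ⟨i, h2, rfl⟩
    · intro c
      simp only [segBefore, List.mem_toFinset, List.mem_map, List.mem_filter, pre,
        List.mem_finRange, true_and, decide_eq_true_eq, Finset.mem_image, Finset.mem_filter,
        Finset.mem_univ]
      rintro ⟨i, h1, rfl⟩ h2
      exact ⟨i, ⟨Nat.sInf_le ⟨i.2, h1, h2⟩, h1⟩, rfl⟩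
  · simp only [segBefore, List.mem_toFinset, List.mem_map, List.mem_filter,
      List.mem_finRange, true_and, decide_eq_true_eq]
    rintro ⟨i, ⟨h1, h2⟩, h3⟩
    rw [π.injective h3] at h2
    exact lt_irrefl _ h2

lemma factor_den (q : ℝ) (hq : 1 ≤ q) (x : Fin n → ℝ) (hx1 : ∑ i, x i = 1)
    (π : Equiv.Perm (Fin n)) (k : Fin n) :
    kappa q x (List.finRange n) - q ^ (((k : ℕ) : ℤ) - (n : ℤ)) * kappa q x (prefixVals π k)
      = Dd q x (pre π k) := by
  have e : (prefixVals π k).toFinset = pre π k := by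
    ext c
    simp [prefixVals, pre]
  rw [kappa_eq q x (prefixVals π k) (seg_nodup _ _), kappa_eq q x _ (List.nodup_finRange n), e, Dd,
    pre_card _ π.injective, List.toFinset_finRange]
  have : Kap q x Finset.univ = 1 := by
    rw [← hx1, Kap]
    simp [ee]
  rw [this, inv_pow, ← zpow_natCast, ← zpow_neg]
  congr 3
  have := k.2
  omega

end Aux

/-- For `n ≥ 1`, real `q ≥ 1` and positive weights summing to one, every
factor occurring in the product formula `psiFormula` is strictly positive (the factors
`κ(π_k; x)` for left-to-right-minimum positions, the factors
`κ(π_{p_k},…,π_k; x) − q⁻¹ κ(π_{p_k},…,π_{k−1}; x)` for the remaining positions, and the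
denominator factors `κ(w₀;x) − q^{k−n−1} κ(π_1,…,π_{k−1}; x)`), and the formula's entries
sum to `1` over `S_n`. -/
theorem qTsetlin_perm_formula_positive_and_normalized (n : ℕ) (hn : 1 ≤ n) (q : ℝ)
    (hq : 1 ≤ q) (x : Fin n → ℝ) (hx : ∀ i, 0 < x i) (hx1 : ∑ i, x i = 1) :
    (∀ π : Equiv.Perm (Fin n), ∀ k : Fin n, (k : ℕ) + 1 < n →
      (isLRM π k → 0 < kappa q x [π k]) ∧
      (¬ isLRM π k →
        0 < kappa q x (segTo π k) - q⁻¹ * kappa q x (segBefore π k)) ∧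
      0 < kappa q x (List.finRange n)
            - q ^ (((k : ℕ) : ℤ) - (n : ℤ)) * kappa q x (prefixVals π k)) ∧
    (∑ π : Equiv.Perm (Fin n), psiFormula n q x π = 1) := by
  have hq0 : q ≠ 0 := by positivity
  have hD : ∀ π : Equiv.Perm (Fin n), ∀ k : Fin n, 0 < Dd q x (pre π k) := fun π k =>
    Dd_pos q hq x hx hx1 _ (by rw [pre_card _ π.injective]; exact k.2)
  refine ⟨fun π k _ => ⟨fun h => ?_, fun h => ?_, ?_⟩, ?_⟩
  · rw [factor_lrm q hq x π k h]; exact ff_pos q hq x hx _ _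
  · rw [factor_not q hq x π k h]; exact ff_pos q hq x hx _ _
  · rw [factor_den q hq x hx1]; exact hD π k
  · have hw : ∀ S : Finset (Fin n), S.card < n →
        ∑ b ∈ Sᶜ, q⁻¹ ^ ee S b * ff q x S b / Dd q x S = 1 := by
      intro S hS
      rw [← Finset.sum_div, sum_ff q hq x hx1, div_self (Dd_pos q hq x hx hx1 S hS).ne']
    rw [← sum_perm (fun S b => q⁻¹ ^ ee S b * ff q x S b / Dd q x S) hw]
    apply Finset.sum_congr rfl
    intro π _
    unfold psiFormula
    rw [Finset.prod_congr rfl (fun k hk => factor_lrm q hq x π k (Finset.mem_filter.1 hk).2.2),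
      Finset.prod_congr rfl (fun k hk => factor_not q hq x π k (Finset.mem_filter.1 hk).2.2),
      Finset.prod_congr rfl (fun k _ => factor_den q hq x hx1 π k)]
    simp only [← Finset.filter_filter]
    rw [Finset.prod_filter_mul_prod_filter_not, Finset.prod_div_distrib, Finset.prod_mul_distrib,
      Finset.prod_pow_eq_pow_sum, ← inv_eq, mul_div_assoc, mul_div_assoc, zpow_neg, zpow_natCast,
      inv_pow]
    congr 1
    rw [← Finset.prod_div_distrib, ← Finset.prod_div_distrib]
    apply Finset.prod_subset (Finset.subset_univ _)
    intro k _ hk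
    have hk' : (k : ℕ) + 1 = n := by
      have := k.2
      simp at hk
      omega
    have hc := hw (pre π k) (by rw [pre_card _ π.injective]; exact k.2)
    have hm : π k ∉ pre π k := by simp [pre]
    have hcompl : (pre π k)ᶜ = {π k} := by
      symm
      apply Finset.eq_of_subset_of_card_le
      · simpa using hm
      · rw [Finset.card_compl, pre_card _ π.injective, Fintype.card_fin]
        simp; omega
    have hee : ee (pre π k) (π k) = 0 := by
      rw [ee_compl, hcompl]
      simp [Finset.filter_singleton]
    rw [hcompl, Finset.sum_singleton, hee, pow_zero, one_mul] at hc
    exact hc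

end QTsetlin
end
end

section
/- Let n ≥ 1 and q ≠ 0, and let x_1,…,x_n be arbitrary weights. The characteristic polynomial of the n!×n! transition matrix of T_{S_n}(q,x) equals ∏_{S ⊆ {1,…,n}} (t − λ_S(q,x))^{d_{n−|S|}}, where for S = {i_1 > i_2 > ⋯ > i_k} one sets λ_S(q,x) = ∑_{j=1}^k x_{i_j}/q^{n−i_j−j+1} (with λ_∅ = 0), and d_m = m!·∑_{r=0}^m (−1)^r/r! is the m-th derangement number. In particular the eigenvalue λ_S(q,x) occurs with algebraic multiplicity d_{n−|S|}. Moreover, if the values λ_S(q,x) are pairwise distinct as S ranges over all subsets of {1,…,n}, then the matrix T_{S_n}(q,x) is diagonalizable. -/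
/-!
STATEMENT 2: characteristic polynomial of the q-Tsetlin library on permutations.
-/

open scoped Classical

noncomputable section

namespace QTsetlin

variable {K : Type} [Field K]

/-- Matrix (row convention: row `π` is `π · T_{k+1}`) of the Hecke generator `T_{k+1}`
(paper indexing), which swaps the (0-based) positions `k` and `k+1`. -/
def genMat (n : ℕ) (q : K) (k : ℕ) :
    Matrix (Equiv.Perm (Fin n)) (Equiv.Perm (Fin n)) K := fun π σ =>
  if h : k + 1 < n then
    if π ⟨k + 1, h⟩ < π ⟨k, Nat.lt_of_succ_lt h⟩ then
      (if σ = π * Equiv.swap ⟨k, Nat.lt_of_succ_lt h⟩ ⟨k + 1, h⟩ then q else 0)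
    else
      (if σ = π * Equiv.swap ⟨k, Nat.lt_of_succ_lt h⟩ ⟨k + 1, h⟩ then 1 else 0)
        + (if σ = π then q - 1 else 0)
  else 0

/-- Matrix of the product `T_k T_{k-1} ⋯ T_1` (paper indexing); `prodGen 0 = 1`. -/
def prodGen (n : ℕ) (q : K) : ℕ → Matrix (Equiv.Perm (Fin n)) (Equiv.Perm (Fin n)) K
  | 0 => 1
  | k + 1 => genMat n q k * prodGen n q k

/-- Matrix of the weighting operator `X_{S_n}(q,x)`: `π ↦ (x_{π_1}/q^{n-π_1}) · π`. -/
def XSn (n : ℕ) (q : K) (x : Fin n → K) :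
    Matrix (Equiv.Perm (Fin n)) (Equiv.Perm (Fin n)) K := fun π σ =>
  if σ = π then
    (if h : 0 < n then x (π ⟨0, h⟩) / q ^ (n - 1 - (π ⟨0, h⟩ : ℕ)) else 0)
  else 0

/-- Matrix of the q-Tsetlin library operator
`T_{S_n}(q,x) = (∑_{i=1}^n T_{i-1} ⋯ T_1) ∘ X_{S_n}(q,x)` on `ℂS_n` (row convention). -/
def TSn (n : ℕ) (q : K) (x : Fin n → K) :
    Matrix (Equiv.Perm (Fin n)) (Equiv.Perm (Fin n)) K :=
  (∑ k ∈ Finset.range n, prodGen n q k) * XSn n q x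

/-- The eigenvalue `λ_S(q,x) = ∑_{j=1}^k x_{i_j} / q^{n - i_j - j + 1}` attached to a subset
`S = {i_1 > i_2 > ⋯ > i_k}` of `{1,…,n}`; for `i ∈ S`, its 1-based rank in the decreasing
order is the number of elements of `S` that are `≥ i`. -/
def lambdaS (n : ℕ) (q : K) (x : Fin n → K) (S : Finset (Fin n)) : K :=
  ∑ i ∈ S, x i /
    q ^ ((n : ℤ) - ((i : ℕ) + 1) - ((S.filter fun t => i ≤ t).card : ℤ) + 1)

/-- The `m`-th derangement number `d_m = m! ∑_{r=0}^m (-1)^r / r!`, written as the integer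
`∑_{r=0}^m (-1)^r · (m!/r!) = ∑_{r=0}^m (-1)^r ∏_{t=r+1}^m t`. -/
def derangeNum (m : ℕ) : ℤ :=
  ∑ r ∈ Finset.range (m + 1), (-1) ^ r * ∏ t ∈ Finset.Icc (r + 1) m, (t : ℤ)

/-- word -/
def wd (K : Type) [Field K] {n : ℕ} (l : List (Fin n)) : FreeAlgebra K (Fin n) :=
  (l.map (FreeAlgebra.ι K)).prod

lemma wd_nil {n : ℕ} : wd K ([] : List (Fin n)) = 1 := by simp [wd]
lemma wd_cons {n : ℕ} (a : Fin n) (l : List (Fin n)) :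
    wd K (a :: l) = FreeAlgebra.ι K a * wd K l := by simp [wd]
lemma wd_append {n : ℕ} (l m : List (Fin n)) :
    wd K (l ++ m) = wd K l * wd K m := by simp [wd]

/-- basis of words -/
def wb (K : Type) [Field K] (n : ℕ) : Module.Basis (List (Fin n)) K (FreeAlgebra K (Fin n)) :=
  (FreeAlgebra.basisFreeMonoid K (Fin n)).reindex FreeMonoid.toList

lemma wb_apply {n : ℕ} (l : List (Fin n)) : wb K n l = wd K l := by
  simp [wb, wd, FreeAlgebra.basisFreeMonoid, FreeAlgebra.equivMonoidAlgebraFreeMonoid]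

/-- q-derivations on words -/
def dw (q : K) {n : ℕ} : List (Fin n) → Fin n → FreeAlgebra K (Fin n)
  | [], _ => 0
  | b :: w, a => if a = b then
      wd K w + (q - 1) • ∑ c ∈ Finset.univ.filter (fun c => a < c), FreeAlgebra.ι K c * dw q w c
    else (if a < b then q else 1) • (FreeAlgebra.ι K b * dw q w a)

/-- q-derivations -/
def dq (q : K) {n : ℕ} (a : Fin n) : FreeAlgebra K (Fin n) →ₗ[K] FreeAlgebra K (Fin n) :=
  (wb K n).constr K (fun l => dw q l a)

lemma dq_wd (q : K) {n : ℕ} (a : Fin n) (l : List (Fin n)) : dq q a (wd K l) = dw q l a := by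
  rw [← wb_apply, dq, Module.Basis.constr_basis]

lemma dq_one (q : K) {n : ℕ} (a : Fin n) : dq q a 1 = 0 := by
  rw [← wd_nil, dq_wd]; rfl

lemma ext_wd {n : ℕ} {M : Type*} [AddCommGroup M] [Module K M]
    {f g : FreeAlgebra K (Fin n) →ₗ[K] M} (h : ∀ l, f (wd K l) = g (wd K l)) : f = g :=
  (wb K n).ext fun l => by simpa [wb_apply] using h l

lemma dq_cons_self (q : K) {n : ℕ} (a : Fin n) (u : FreeAlgebra K (Fin n)) :
    dq q a (FreeAlgebra.ι K a * u) = u + (q - 1) • ∑ c ∈ Finset.univ.filter (fun c => a < c),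
      FreeAlgebra.ι K c * dq q c u := by
  have : (dq q a) ∘ₗ (LinearMap.mulLeft K (FreeAlgebra.ι K a)) = LinearMap.id + (q - 1) •
      ∑ c ∈ Finset.univ.filter (fun c => a < c),
      (LinearMap.mulLeft K (FreeAlgebra.ι K c)) ∘ₗ dq q c := by
    apply ext_wd
    intro l
    simp [← wd_cons, dq_wd, dw, LinearMap.sum_apply]
  simpa [LinearMap.sum_apply] using LinearMap.congr_fun this u

lemma dq_cons_ne (q : K) {n : ℕ} {a b : Fin n} (h : a ≠ b) (u : FreeAlgebra K (Fin n)) :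
    dq q a (FreeAlgebra.ι K b * u) = (if a < b then q else 1) • (FreeAlgebra.ι K b * dq q a u) := by
  have : (dq q a) ∘ₗ (LinearMap.mulLeft K (FreeAlgebra.ι K b)) = (if a < b then q else 1) •
      (LinearMap.mulLeft K (FreeAlgebra.ι K b)) ∘ₗ dq q a := by
    apply ext_wd
    intro l
    simp only [LinearMap.comp_apply, LinearMap.mulLeft_apply, LinearMap.smul_apply]
    rw [← wd_cons, dq_wd, dw, if_neg h, dq_wd]
  exact LinearMap.congr_fun this u

/-- multilinear words with letter set `A` -/
def WS (K : Type) [Field K] {n : ℕ} (A : Finset (Fin n)) : Submodule K (FreeAlgebra K (Fin n)) :=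
  Submodule.span K (wd K '' {l | l.Nodup ∧ l.toFinset = A})

lemma wd_mem {n : ℕ} {A : Finset (Fin n)} {l : List (Fin n)} (h : l.Nodup) (h' : l.toFinset = A) :
    wd K l ∈ WS K A := Submodule.subset_span ⟨l, ⟨h, h'⟩, rfl⟩

lemma WS_induction {n : ℕ} {A : Finset (Fin n)} (p : Submodule K (FreeAlgebra K (Fin n)))
    (h : ∀ l : List (Fin n), l.Nodup → l.toFinset = A → wd K l ∈ p) : WS K A ≤ p := by
  rw [WS, Submodule.span_le]
  rintro _ ⟨l, ⟨h1, h2⟩, rfl⟩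
  exact h l h1 h2

lemma cons_mem {n : ℕ} {A B : Finset (Fin n)} {a : Fin n} (ha : a ∉ A) (hB : insert a A = B)
    {u : FreeAlgebra K (Fin n)} (hu : u ∈ WS K A) : FreeAlgebra.ι K a * u ∈ WS K B := by
  have : WS K A ≤ (WS K B).comap (LinearMap.mulLeft K (FreeAlgebra.ι K a)) := by
    apply WS_induction
    intro l h1 h2
    simp only [Submodule.mem_comap, LinearMap.mulLeft_apply]
    rw [← wd_cons]
    apply wd_mem
    · simp [h1]; intro h; exact ha (by rw [← h2]; simpa using h)
    · simp [h2, hB]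
  exact this hu

lemma mul_mem {n : ℕ} {A B C : Finset (Fin n)} (h : Disjoint A B) (hC : A ∪ B = C)
    {u v : FreeAlgebra K (Fin n)} (hu : u ∈ WS K A) (hv : v ∈ WS K B) : u * v ∈ WS K C := by
  have : WS K A ≤ (WS K C).comap (LinearMap.mulRight K v) := by
    apply WS_induction
    intro l h1 h2
    have : WS K B ≤ (WS K C).comap (LinearMap.mulLeft K (wd K l)) := by
      apply WS_induction
      intro m h3 h4
      simp only [Submodule.mem_comap, LinearMap.mulLeft_apply]
      rw [← wd_append]
      apply wd_mem
      · refine List.Nodup.append h1 h3 ?_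
        intro x hx hy
        exact Finset.disjoint_left.1 h (by rw [← h2]; simpa using hx) (by rw [← h4]; simpa using hy)
      · simp [h2, h4, hC]
    exact this hv
  exact this hu

lemma dw_not_mem (q : K) {n : ℕ} (l : List (Fin n)) (a : Fin n) (h : a ∉ l) : dw q l a = 0 := by
  induction l with
  | nil => rfl
  | cons b l ih =>
    simp only [List.mem_cons, not_or] at h
    rw [dw, if_neg h.1, ih h.2]; simp

lemma dw_mem (q : K) {n : ℕ} (l : List (Fin n)) (hl : l.Nodup) (a : Fin n) :
    dw q l a ∈ WS K (l.toFinset.erase a) := by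
  induction l generalizing a with
  | nil => simp [dw]
  | cons b l ih =>
    rw [List.nodup_cons] at hl
    have hb : b ∉ l.toFinset := by simpa using hl.1
    rw [dw]
    split_ifs with h1 h2
    all_goals try subst h1
    · rw [List.toFinset_cons, Finset.erase_insert hb]
      refine add_mem (wd_mem hl.2 rfl) (Submodule.smul_mem _ _ (Submodule.sum_mem _ ?_))
      intro c hc
      by_cases hcl : c ∈ l
      · exact cons_mem (Finset.notMem_erase c _) (Finset.insert_erase (by simpa using hcl)) (ih hl.2 c)
      · rw [dw_not_mem q l c hcl]; simp
    all_goals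
      refine Submodule.smul_mem _ _ (cons_mem (A := l.toFinset.erase a) ?_ ?_ (ih hl.2 a))
      · simp [hb]
      · rw [List.toFinset_cons, Finset.erase_insert_of_ne (Ne.symm h1)]

lemma dq_mem (q : K) {n : ℕ} {A : Finset (Fin n)} (a : Fin n) {u : FreeAlgebra K (Fin n)}
    (hu : u ∈ WS K A) : dq q a u ∈ WS K (A.erase a) := by
  have : WS K A ≤ (WS K (A.erase a)).comap (dq q a) := by
    apply WS_induction
    intro l h1 h2
    rw [Submodule.mem_comap, dq_wd, ← h2]
    exact dw_mem q l h1 a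
  exact this hu

lemma dq_eq_zero (q : K) {n : ℕ} {A : Finset (Fin n)} {a : Fin n} (ha : a ∉ A)
    {u : FreeAlgebra K (Fin n)} (hu : u ∈ WS K A) : dq q a u = 0 := by
  have : WS K A ≤ LinearMap.ker (dq q a) := by
    apply WS_induction
    intro l h1 h2
    rw [LinearMap.mem_ker, dq_wd]
    exact dw_not_mem q l a (by intro h; apply ha; rw [← h2]; simpa using h)
  exact this hu

lemma dq_dq_wd (q : K) {n : ℕ} (l : List (Fin n)) (hl : l.Nodup) (a b : Fin n) (hab : a < b) :
    dq q b (dq q a (wd K l)) = q • dq q a (dq q b (wd K l)) := by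
  induction l generalizing a b with
  | nil => simp [wd_nil, dq_one]
  | cons c l ih =>
    rw [List.nodup_cons] at hl
    have ih := ih hl.2
    have hsq : ∀ b, dq q b (dq q b (wd K l)) = 0 := fun b =>
      dq_eq_zero q (Finset.notMem_erase b _) (dq_mem q b (wd_mem hl.2 rfl))
    rw [wd_cons]
    by_cases hca : c = a
    · subst hca
      rw [dq_cons_self, dq_cons_ne q hab.ne', if_neg hab.not_gt, one_smul, dq_cons_self]
      simp only [map_add, map_smul, map_sum]
      have h1 : ∀ d ∈ Finset.univ.filter (fun d => c < d),
          dq q b (FreeAlgebra.ι K d * dq q d (wd K l)) =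
          q • (FreeAlgebra.ι K d * dq q d (dq q b (wd K l)))
          + (if d = b then dq q b (wd K l) else 0) + (if b < d then
              (1 - q) • (FreeAlgebra.ι K d * dq q d (dq q b (wd K l))) else 0)
          + (if d = b then (q - 1) • ∑ e ∈ Finset.univ.filter (fun e => b < e),
              (FreeAlgebra.ι K e * dq q e (dq q b (wd K l))) else 0) := by
        intro d hd
        rcases lt_trichotomy d b with h | h | h
        · rw [dq_cons_ne q h.ne', if_neg h.not_gt, if_neg h.ne, if_neg h.not_gt, if_neg h.ne,
            ih d b h]
          simp
        · subst h
          rw [dq_cons_self, if_pos rfl, if_pos rfl, if_neg (lt_irrefl _), hsq]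
          simp
        · rw [dq_cons_ne q h.ne, if_pos h, if_neg h.ne', if_pos h, if_neg h.ne', ih b d h]
          simp only [mul_smul_comm, add_zero]
          module
      rw [Finset.sum_congr rfl h1]
      simp only [Finset.sum_add_distrib, Finset.sum_ite_eq', Finset.mem_filter, Finset.mem_univ,
        true_and, hab, if_true, ← Finset.smul_sum, ← Finset.sum_filter]
      have h2 : Finset.filter (fun d => b < d) (Finset.univ.filter fun d => c < d) =
          Finset.univ.filter fun d => b < d := by
        ext d; simp; intro h; exact hab.trans h
      simp only [h2]
      module
    · by_cases hcb : c = b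
      · subst hcb
        rw [dq_cons_self, dq_cons_ne q hab.ne, if_pos hab, map_smul, dq_cons_self]
        simp only [map_add, map_smul, map_sum]
        congr 3
        refine Finset.sum_congr rfl fun d hd => ?_
        have hd : c < d := by simpa using hd
        rw [dq_cons_ne q (hab.trans hd).ne, if_pos (hab.trans hd), ih a d (hab.trans hd)]
        simp
      · rw [dq_cons_ne q (Ne.symm hca), dq_cons_ne q (Ne.symm hcb), map_smul, map_smul,
          dq_cons_ne q (Ne.symm hca), dq_cons_ne q (Ne.symm hcb), ih a b hab]
        simp only [mul_smul_comm, smul_smul]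
        congr 1
        ring

lemma dq_dq (q : K) {n : ℕ} {A : Finset (Fin n)} {u : FreeAlgebra K (Fin n)} (hu : u ∈ WS K A)
    (a b : Fin n) (hab : a < b) : dq q b (dq q a u) = q • dq q a (dq q b u) := by
  have : WS K A ≤ LinearMap.ker (dq q b ∘ₗ dq q a - q • dq q a ∘ₗ dq q b) := by
    apply WS_induction
    intro l h1 h2
    rw [LinearMap.mem_ker]
    simp [dq_dq_wd q l h1 a b hab]
  have := this hu
  rw [LinearMap.mem_ker] at this
  simpa [sub_eq_zero] using this

/-- derivation of concatenation with a kernel element -/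
lemma dq_mul (q : K) {n : ℕ} {u : FreeAlgebra K (Fin n)} (hu : ∀ a, dq q a u = 0)
    (v : FreeAlgebra K (Fin n)) (a : Fin n) : dq q a (v * u) = dq q a v * u := by
  have : dq q a ∘ₗ LinearMap.mulRight K u = LinearMap.mulRight K u ∘ₗ dq q a := by
    apply ext_wd
    intro l
    simp only [LinearMap.comp_apply, LinearMap.mulRight_apply]
    induction l generalizing a with
    | nil => simp [wd_nil, dq_one, hu]
    | cons b l ih =>
      rw [wd_cons, mul_assoc]
      by_cases h : a = b
      · subst h
        rw [dq_cons_self, dq_cons_self]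
        simp [ih, add_mul, Finset.sum_mul, mul_assoc]
      · rw [dq_cons_ne q h, dq_cons_ne q h, ih]
        simp [mul_assoc]
  simpa using LinearMap.congr_fun this v

/-- the Tsetlin operator on words -/
def Top (q : K) {n : ℕ} (y : Fin n → K) : Module.End K (FreeAlgebra K (Fin n)) :=
  ∑ a, y a • (LinearMap.mulLeft K (FreeAlgebra.ι K a)) ∘ₗ dq q a

lemma Top_apply (q : K) {n : ℕ} (y : Fin n → K) (u : FreeAlgebra K (Fin n)) :
    Top q y u = ∑ a, y a • (FreeAlgebra.ι K a * dq q a u) := by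
  simp [Top, LinearMap.sum_apply]

lemma Top_mem (q : K) {n : ℕ} (y : Fin n → K) {A : Finset (Fin n)} {u : FreeAlgebra K (Fin n)}
    (hu : u ∈ WS K A) : Top q y u ∈ WS K A := by
  rw [Top_apply]
  refine Submodule.sum_mem _ fun a _ => Submodule.smul_mem _ _ ?_
  by_cases ha : a ∈ A
  · exact cons_mem (Finset.notMem_erase a A) (Finset.insert_erase ha) (dq_mem q a hu)
  · rw [dq_eq_zero q ha hu]; simp

lemma Top_mul (q : K) {n : ℕ} (y : Fin n → K) {u : FreeAlgebra K (Fin n)}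
    (hu : ∀ a, dq q a u = 0) (v : FreeAlgebra K (Fin n)) : Top q y (v * u) = Top q y v * u := by
  simp [Top_apply, dq_mul q hu, Finset.sum_mul, mul_assoc]

/-- the eigenvalues -/
def mu (q : K) {n : ℕ} (y : Fin n → K) (S : Finset (Fin n)) : K :=
  ∑ a ∈ S, y a * q ^ (S.filter (fun t => a < t)).card

/-- augmentation -/
def aug (K : Type) [Field K] (n : ℕ) : FreeAlgebra K (Fin n) →ₐ[K] K :=
  FreeAlgebra.lift K (fun _ => 1)

lemma aug_ι {n : ℕ} (a : Fin n) : aug K n (FreeAlgebra.ι K a) = 1 := by simp [aug]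

lemma aug_wd {n : ℕ} (l : List (Fin n)) : aug K n (wd K l) = 1 := by
  induction l with
  | nil => simp [wd_nil]
  | cons a l ih => simp [wd_cons, aug_ι, ih]

lemma geom_finset (q : K) {n : ℕ} (U : Finset (Fin n)) :
    1 + (q - 1) * ∑ c ∈ U, q ^ (U.filter (fun t => c < t)).card = q ^ U.card := by
  induction U using Finset.induction_on_min with
  | empty => simp
  | insert a U ha ih =>
    have haU : a ∉ U := fun h => lt_irrefl _ (ha a h)
    rw [Finset.sum_insert haU, Finset.card_insert_of_notMem haU]
    have h1 : (insert a U).filter (fun t => a < t) = U := by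
      rw [Finset.filter_insert, if_neg (lt_irrefl _), Finset.filter_true_of_mem ha]
    have h2 : ∀ c ∈ U, q ^ ((insert a U).filter (fun t => c < t)).card =
        q ^ (U.filter (fun t => c < t)).card := by
      intro c hc
      rw [Finset.filter_insert, if_neg (ha c hc).not_gt]
    rw [h1, Finset.sum_congr rfl h2, pow_succ]
    linear_combination ih

lemma aug_dw (q : K) {n : ℕ} (l : List (Fin n)) (hl : l.Nodup) (a : Fin n) (ha : a ∈ l) :
    aug K n (dw q l a) = q ^ (l.toFinset.filter (fun t => a < t)).card := by
  induction l generalizing a with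
  | nil => simp at ha
  | cons b l ih =>
    rw [List.nodup_cons] at hl
    rw [dw]
    by_cases hab : a = b
    · subst hab
      rw [if_pos rfl, List.toFinset_cons, Finset.filter_insert, if_neg (lt_irrefl _),
        ← geom_finset]
      simp only [map_add, map_smul, map_sum, map_mul, aug_wd, aug_ι, one_mul, smul_eq_mul]
      congr 2
      symm
      apply Finset.sum_subset_zero_on_sdiff
      · intro c; simp
      · intro c hc
        simp only [Finset.mem_sdiff, Finset.mem_filter, Finset.mem_univ, true_and,
          List.mem_toFinset, not_and] at hc
        rw [dw_not_mem q l c (fun h => hc.2 h hc.1), map_zero]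
      · intro c hc
        simp only [Finset.mem_filter, List.mem_toFinset] at hc
        rw [ih hl.2 c hc.1, Finset.filter_filter]
        congr 2
        ext t
        simp only [Finset.mem_filter]
        constructor
        · rintro ⟨h1, h2, h3⟩; exact ⟨h1, h3⟩
        · rintro ⟨h1, h2⟩; exact ⟨h1, hc.2.trans h2, h2⟩
    · have hal : a ∈ l := by simpa [hab] using ha
      rw [if_neg hab, List.toFinset_cons, Finset.filter_insert, map_smul, map_mul, aug_ι, one_mul,
        ih hl.2 a hal]
      have hb : b ∉ l.toFinset.filter (fun t => a < t) := by simp [hl.1]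
      split_ifs with h
      · rw [Finset.card_insert_of_notMem hb, pow_succ', smul_eq_mul]
      · simp

lemma aug_Top (q : K) {n : ℕ} (y : Fin n → K) {A : Finset (Fin n)} {u : FreeAlgebra K (Fin n)}
    (hu : u ∈ WS K A) : aug K n (Top q y u) = mu q y A * aug K n u := by
  have : WS K A ≤ LinearMap.ker ((aug K n).toLinearMap ∘ₗ Top q y -
      mu q y A • (aug K n).toLinearMap) := by
    apply WS_induction
    intro l h1 h2
    rw [LinearMap.mem_ker]
    simp only [LinearMap.sub_apply, LinearMap.comp_apply, AlgHom.toLinearMap_apply,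
      LinearMap.smul_apply, aug_wd, Top_apply, map_sum, map_smul, map_mul, aug_ι, one_mul, dq_wd,
      smul_eq_mul, mul_one, sub_eq_zero, mu]
    symm
    apply Finset.sum_subset_zero_on_sdiff (Finset.subset_univ _)
    · intro a ha
      rw [dw_not_mem, map_zero, mul_zero]
      intro h; simp [← h2, h] at ha
    · intro a ha
      rw [aug_dw q l h1 a (by rw [← h2] at ha; simpa using ha), h2]
  have := this hu
  rw [LinearMap.mem_ker] at this
  simpa [sub_eq_zero] using this

lemma perms_finite {n : ℕ} (A : Finset (Fin n)) :
    {l : List (Fin n) | l.Nodup ∧ l.toFinset = A} = (A.toList.permutations.toFinset : Set _) := by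
  ext l
  simp only [Set.mem_ofPred_eq, List.coe_toFinset, List.mem_permutations]
  constructor
  · rintro ⟨h1, rfl⟩
    exact (List.perm_ext_iff_of_nodup h1 (Finset.nodup_toList _)).2 (by simp)
  · intro h
    refine ⟨h.nodup_iff.2 (Finset.nodup_toList _), ?_⟩
    rw [List.toFinset_eq_of_perm _ _ h, Finset.toList_toFinset]

instance WS_fin {n : ℕ} (A : Finset (Fin n)) : Module.Finite K (WS K A) := by
  rw [WS, perms_finite]
  exact Module.Finite.span_of_finite K (Set.Finite.image _ (Finset.finite_toSet _))

lemma wd_linInd (n : ℕ) : LinearIndependent K (wd K : List (Fin n) → _) := by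
  have := (wb K n).linearIndependent
  convert this using 1
  ext l; rw [wb_apply]

lemma WS_finrank {n : ℕ} (A : Finset (Fin n)) : Module.finrank K (WS K A) = A.card.factorial := by
  have h : WS K A = Submodule.span K (Set.range fun l : A.toList.permutations.toFinset => wd K l.1) := by
    rw [WS, perms_finite, Set.image_eq_range]; rfl
  rw [h, finrank_span_eq_card]
  · rw [Fintype.card_coe, List.toFinset_card_of_nodup, List.length_permutations, Finset.length_toList]
    exact List.nodup_permutations _ (Finset.nodup_toList _)
  · exact (wd_linInd n).comp _ Subtype.val_injective

lemma exists_eigvec (q : K) {n : ℕ} (y : Fin n → K) (A : Finset (Fin n)) :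
    ∃ v ∈ WS K A, v ≠ 0 ∧ Top q y v = mu q y A • v := by
  let g : WS K A →ₗ[K] WS K A := (Top q y).restrict (fun u hu => Top_mem q y hu) - mu q y A • LinearMap.id
  by_contra hcon
  push Not at hcon
  have hinj : Function.Injective g := by
    rw [injective_iff_map_eq_zero]
    intro u hu
    by_contra hne
    apply hcon u.1 u.2 (by simpa using hne)
    have := congrArg Subtype.val hu
    simpa [g, sub_eq_zero] using this
  have hsurj := LinearMap.injective_iff_surjective.1 hinj
  have h1 : wd K A.toList ∈ WS K A := wd_mem (Finset.nodup_toList _) (Finset.toList_toFinset _)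
  obtain ⟨u, hu⟩ := hsurj ⟨_, h1⟩
  have := congrArg (fun z => aug K n z.1) hu
  simp [g, aug_wd, aug_Top q y u.2] at this

/-- partial kernels -/
def KS (q : K) {n : ℕ} (A C : Finset (Fin n)) : Submodule K (FreeAlgebra K (Fin n)) :=
  WS K A ⊓ ⨅ c ∈ C, LinearMap.ker (dq q c)

lemma mem_KS {q : K} {n : ℕ} {A C : Finset (Fin n)} {u : FreeAlgebra K (Fin n)} :
    u ∈ KS q A C ↔ u ∈ WS K A ∧ ∀ c ∈ C, dq q c u = 0 := by
  simp [KS, Submodule.mem_iInf]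

instance KS_fin (q : K) {n : ℕ} (A C : Finset (Fin n)) : Module.Finite K (KS q A C) :=
  Submodule.finiteDimensional_of_le (inf_le_left : KS q A C ≤ WS K A)

lemma finrank_step {V : Type*} [AddCommGroup V] [Module K V] (f : V →ₗ[K] V)
    (P Q R : Submodule K V) [Module.Finite K P] [Module.Finite K Q] [Module.Finite K R]
    (h1 : ∀ u ∈ P, f u ∈ Q) (h2 : ∀ u ∈ P, f u = 0 → u ∈ R) :
    Module.finrank K P ≤ Module.finrank K R + Module.finrank K Q := by
  have h := LinearMap.finrank_range_add_finrank_ker (f.domRestrict P)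
  have a1 : Module.finrank K (LinearMap.range (f.domRestrict P)) ≤ Module.finrank K Q := by
    apply Submodule.finrank_mono
    rintro _ ⟨u, rfl⟩
    exact h1 u.1 u.2
  have a2 : Module.finrank K (LinearMap.ker (f.domRestrict P)) ≤ Module.finrank K R := by
    rw [← Submodule.finrank_map_subtype_eq]
    apply Submodule.finrank_mono
    rintro _ ⟨u, hu, rfl⟩
    exact h2 u.1 u.2 hu
  omega

lemma KS_step {q : K} (hq : q ≠ 0) {n : ℕ} (A C : Finset (Fin n)) (a : Fin n) (haC : a ∉ C) :
    Module.finrank K (KS q A C) ≤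
      Module.finrank K (KS q A (insert a C)) + Module.finrank K (KS q (A.erase a) C) := by
  apply finrank_step (dq q a)
  · intro u hu
    rw [mem_KS] at hu ⊢
    refine ⟨dq_mem q a hu.1, fun c hc => ?_⟩
    have hca : c ≠ a := by rintro rfl; exact haC hc
    rcases lt_or_gt_of_ne hca with h | h
    · have := dq_dq q hu.1 c a h
      rw [hu.2 c hc, map_zero] at this
      exact (smul_eq_zero.1 this.symm).resolve_left hq
    · rw [dq_dq q hu.1 a c h, hu.2 c hc]; simp
  · intro u hu hk
    rw [mem_KS] at hu ⊢
    refine ⟨hu.1, fun c hc => ?_⟩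
    rcases Finset.mem_insert.1 hc with rfl | hc
    · exact hk
    · exact hu.2 c hc

/-- kernel dimension -/
def kap (q : K) {n : ℕ} (A : Finset (Fin n)) : ℕ := Module.finrank K (KS q A A)

lemma KS_le {q : K} (hq : q ≠ 0) {n : ℕ} (U : Finset (Fin n)) : ∀ A : Finset (Fin n), U ⊆ A →
    Module.finrank K (KS q A (A \ U)) ≤ ∑ S ∈ U.powerset, kap q (A \ S) := by
  induction U using Finset.induction_on with
  | empty => intro A _; rw [Finset.powerset_empty, Finset.sum_singleton, Finset.sdiff_empty]; exact le_rfl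
  | insert a U ha ih =>
    intro A hA
    have haA : a ∈ A := hA (Finset.mem_insert_self _ _)
    have hUA : U ⊆ A := (Finset.subset_insert _ _).trans hA
    have h := KS_step hq A (A \ insert a U) a (by simp)
    have e1 : insert a (A \ insert a U) = A \ U := by
      ext t; simp only [Finset.mem_insert, Finset.mem_sdiff, not_or]
      constructor
      · rintro (rfl | h); exacts [⟨haA, ha⟩, ⟨h.1, h.2.2⟩]
      · rintro ⟨h1, h2⟩
        by_cases h : t = a
        · exact Or.inl h
        · exact Or.inr ⟨h1, h, h2⟩
    have e2 : A \ insert a U = A.erase a \ U := by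
      ext t; simp only [Finset.mem_sdiff, Finset.mem_insert, Finset.mem_erase, not_or]; tauto
    rw [e1] at h
    rw [Finset.sum_powerset_insert ha]
    refine h.trans (add_le_add (ih A hUA) ?_)
    rw [e2]
    refine (ih (A.erase a) (fun t ht => Finset.mem_erase.2 ⟨by rintro rfl; exact ha ht, hUA ht⟩)).trans
      (le_of_eq (Finset.sum_congr rfl fun S _ => ?_))
    congr 1
    ext t; simp only [Finset.mem_sdiff, Finset.mem_insert, Finset.mem_erase, not_or]; tauto

lemma factorial_le {q : K} (hq : q ≠ 0) {n : ℕ} (A : Finset (Fin n)) :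
    A.card.factorial ≤ ∑ S ∈ A.powerset, kap q (A \ S) := by
  refine le_trans (le_of_eq ?_) (KS_le hq A A subset_rfl)
  have : KS q A (A \ A) = WS K A := by ext u; simp [mem_KS]
  rw [← WS_finrank (K := K), this]

/-- A big part of the eigenspace -/
lemma eigen_part (q : K) {n : ℕ} (y : Fin n → K) {A S : Finset (Fin n)} (hS : S ⊆ A) :
    ∃ b : Fin (kap q (A \ S)) → FreeAlgebra K (Fin n), LinearIndependent K b ∧
      ∀ i, b i ∈ WS K A ∧ Top q y (b i) = mu q y S • b i := by
  obtain ⟨v, hv, hv0, hv1⟩ := exists_eigvec q y S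
  let b0 := Module.finBasis K (KS q (A \ S) (A \ S))
  have hb0 : LinearIndependent K (fun i => (b0 i : FreeAlgebra K (Fin n))) :=
    b0.linearIndependent.map' (Submodule.subtype _) (Submodule.ker_subtype _)
  refine ⟨fun i => v * (b0 i : FreeAlgebra K (Fin n)), ?_, fun i => ?_⟩
  · refine hb0.map' (LinearMap.mulLeft K v) ?_
    rw [LinearMap.ker_eq_bot]
    exact mul_right_injective₀ hv0
  · have hb := mem_KS.1 (b0 i).2
    have hd : ∀ a, dq q a (b0 i : FreeAlgebra K (Fin n)) = 0 := by
      intro a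
      by_cases ha : a ∈ A \ S
      · exact hb.2 a ha
      · exact dq_eq_zero q ha hb.1
    refine ⟨mul_mem Finset.disjoint_sdiff (Finset.union_sdiff_of_subset hS) hv hb.1, ?_⟩
    rw [Top_mul q y hd, hv1, smul_mul_assoc]

lemma sigma_linInd {V : Type*} [AddCommGroup V] [Module K V] (f : Module.End K V) {ι : Type*}
    (μ : ι → K) (hμ : Function.Injective μ) (m : ι → ℕ) (b : ∀ i, Fin (m i) → V)
    (hb : ∀ i, LinearIndependent K (b i)) (hf : ∀ i j, f (b i j) = μ i • b i j) :
    LinearIndependent K (fun p : (i : ι) × Fin (m i) => b p.1 p.2) := by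
  have h := f.eigenspaces_iSupIndep.comp hμ
  have hle : ∀ i, Submodule.span K (Set.range (b i)) ≤ f.eigenspace (μ i) := by
    intro i
    rw [Submodule.span_le]
    rintro _ ⟨j, rfl⟩
    exact Module.End.mem_eigenspace_iff.2 (hf i j)
  apply linearIndependent_iUnion_finite (f := b) hb
  intro i t _ hi
  exact (h.disjoint_biSup hi).mono (hle i) (iSup₂_mono fun j _ => hle j)

/-- derangement numbers -/
lemma sum_kap_le (q : K) {n : ℕ} (y : Fin n → K) (hy : Function.Injective (mu q y))
    (A : Finset (Fin n)) : ∑ S ∈ A.powerset, kap q (A \ S) ≤ A.card.factorial := by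
  have hS : ∀ S : A.powerset, S.1 ⊆ A := fun S => Finset.mem_powerset.1 S.2
  choose b hb1 hb2 using fun S : A.powerset => eigen_part q y (hS S)
  have hli := sigma_linInd (Top q y) (fun S : A.powerset => mu q y S.1)
    (hy.comp Subtype.val_injective) (fun S => kap q (A \ S.1)) b hb1 (fun S i => (hb2 S i).2)
  let b' : ((S : A.powerset) × Fin (kap q (A \ S.1))) → WS K A := fun p => ⟨b p.1 p.2, (hb2 p.1 p.2).1⟩
  have hli' : LinearIndependent K b' := LinearIndependent.of_comp (WS K A).subtype hli
  have := hli'.fintype_card_le_finrank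
  rw [WS_finrank, Fintype.card_sigma] at this
  simp only [Fintype.card_fin] at this
  rwa [← Finset.sum_coe_sort]

lemma sum_numDer (n : ℕ) (A : Finset (Fin n)) :
    ∑ S ∈ A.powerset, numDerangements (A \ S).card = A.card.factorial := by
  have h : ∀ S : Finset A, numDerangements (Sᶜ).card =
      Fintype.card {f : Equiv.Perm A // Finset.univ.filter (fun a => f a = a) = S} := by
    intro S
    have e := derangements.subtypeEquiv (fun a : A => a ∈ Sᶜ)
    have h1 := card_derangements_eq_numDerangements {a : A // a ∈ Sᶜ}
    rw [Fintype.card_coe] at h1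
    rw [← h1, Fintype.card_congr e]
    apply Fintype.card_congr
    refine Equiv.subtypeEquivRight fun f => ?_
    simp only [Finset.mem_compl, not_not, Function.mem_fixedPoints, Function.IsFixedPt,
      Finset.ext_iff, Finset.mem_filter, Finset.mem_univ, true_and]
    exact forall_congr' fun a => Iff.comm
  have h2 : ∑ S : Finset A, numDerangements (Sᶜ).card = A.card.factorial := by
    rw [Finset.sum_congr rfl fun S _ => h S, ← Fintype.card_sigma,
      Fintype.card_congr (Equiv.sigmaFiberEquiv _), Fintype.card_perm, Fintype.card_coe]
  rw [← h2]
  simp only [Finset.card_compl, Fintype.card_coe]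
  rw [← Finset.powerset_univ, Finset.sum_powerset_apply_card (fun k => numDerangements (A.card - k)),
    Finset.card_univ, Fintype.card_coe,
    ← Finset.sum_powerset_apply_card (fun k => numDerangements (A.card - k))]
  refine Finset.sum_congr rfl fun S hS => ?_
  rw [Finset.card_sdiff_of_subset (Finset.mem_powerset.1 hS)]

lemma kap_eq {q : K} (hq : q ≠ 0) {n : ℕ} (y : Fin n → K) (hy : Function.Injective (mu q y))
    (A : Finset (Fin n)) : kap q A = numDerangements A.card := by
  induction A using Finset.strongInduction with
  | H A ih =>
    have h1 := le_antisymm (sum_kap_le q y hy A) (factorial_le hq A)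
    rw [← sum_numDer] at h1
    have he : ∅ ∈ A.powerset := Finset.empty_mem_powerset A
    rw [← Finset.add_sum_erase _ _ he, ← Finset.add_sum_erase _ _ he] at h1
    have : ∑ S ∈ A.powerset.erase ∅, kap q (A \ S) =
        ∑ S ∈ A.powerset.erase ∅, numDerangements (A \ S).card := by
      refine Finset.sum_congr rfl fun S hS => ?_
      rw [Finset.mem_erase, Finset.mem_powerset] at hS
      exact ih _ (Finset.sdiff_ssubset hS.2 (Finset.nonempty_iff_ne_empty.2 hS.1))
    rw [this] at h1
    simpa using h1

lemma derangeNum_eq (m : ℕ) : (derangeNum m).toNat = numDerangements m := by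
  have : derangeNum m = (numDerangements m : ℤ) := by
    rw [numDerangements_sum, derangeNum]
    refine Finset.sum_congr rfl fun r hr => ?_
    have hr : r ≤ m := by simpa [Nat.lt_succ_iff] using hr
    congr 1
    obtain ⟨k, rfl⟩ := Nat.exists_eq_add_of_le hr
    rw [Nat.add_sub_cancel_left]
    clear hr
    induction k with
    | zero => simp
    | succ k ih =>
      rw [← add_assoc, Finset.prod_Icc_succ_top (by omega), ih (by simp), Nat.ascFactorial_succ]
      push_cast; ring
  rw [this]; simp

/-- Hecke generator on words -/
def hw (q : K) {n : ℕ} : ℕ → List (Fin n) → FreeAlgebra K (Fin n)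
  | 0, a :: b :: w => if b < a then q • wd K (b :: a :: w)
      else wd K (b :: a :: w) + (q - 1) • wd K (a :: b :: w)
  | k + 1, a :: w => FreeAlgebra.ι K a * hw q k w
  | _, _ => 0

/-- Hecke generator -/
def hl (q : K) (n : ℕ) (k : ℕ) : Module.End K (FreeAlgebra K (Fin n)) :=
  (wb K n).constr K (hw q k)

lemma hl_wd (q : K) {n : ℕ} (k : ℕ) (l : List (Fin n)) : hl q n k (wd K l) = hw q k l := by
  rw [← wb_apply, hl, Module.Basis.constr_basis]

lemma hl_succ (q : K) {n : ℕ} (k : ℕ) (b : Fin n) (u : FreeAlgebra K (Fin n)) :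
    hl q n (k + 1) (FreeAlgebra.ι K b * u) = FreeAlgebra.ι K b * hl q n k u := by
  have : hl q n (k + 1) ∘ₗ (LinearMap.mulLeft K (FreeAlgebra.ι K b)) =
      (LinearMap.mulLeft K (FreeAlgebra.ι K b)) ∘ₗ hl q n k := by
    apply ext_wd
    intro l
    simp only [LinearMap.comp_apply, LinearMap.mulLeft_apply]
    rw [← wd_cons, hl_wd, hl_wd, hw]
  exact LinearMap.congr_fun this u

lemma hl_zero (q : K) {n : ℕ} (b a : Fin n) (u : FreeAlgebra K (Fin n)) :
    hl q n 0 (FreeAlgebra.ι K b * (FreeAlgebra.ι K a * u)) =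
      if a < b then q • (FreeAlgebra.ι K a * (FreeAlgebra.ι K b * u)) else
      FreeAlgebra.ι K a * (FreeAlgebra.ι K b * u) +
        (q - 1) • (FreeAlgebra.ι K b * (FreeAlgebra.ι K a * u)) := by
  let L : Fin n → Module.End K (FreeAlgebra K (Fin n)) := fun b =>
    (LinearMap.mulLeft K (FreeAlgebra.ι K b))
  have : hl q n 0 ∘ₗ L b ∘ₗ L a =
      if a < b then q • (L a ∘ₗ L b) else L a ∘ₗ L b + (q - 1) • (L b ∘ₗ L a) := by
    apply ext_wd
    intro l
    simp only [LinearMap.comp_apply, L, LinearMap.mulLeft_apply]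
    rw [← wd_cons, ← wd_cons, hl_wd, hw]
    split_ifs <;> simp [wd_cons]
  have := LinearMap.congr_fun this u
  simp only [LinearMap.comp_apply, L, LinearMap.mulLeft_apply] at this
  rw [this]
  split_ifs <;> simp

/-- products of generators -/
def pl (q : K) (n : ℕ) : ℕ → Module.End K (FreeAlgebra K (Fin n))
  | 0 => LinearMap.id
  | k + 1 => pl q n k ∘ₗ hl q n k

lemma pl_succ (q : K) {n : ℕ} (k : ℕ) (b : Fin n) (u : FreeAlgebra K (Fin n)) :
    pl q n (k + 1) (FreeAlgebra.ι K b * u) = hl q n 0 (FreeAlgebra.ι K b * pl q n k u) := by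
  induction k generalizing u with
  | zero => simp [pl]
  | succ k ih =>
    rw [pl, LinearMap.comp_apply, hl_succ, ih]; rfl

lemma sum_pl (q : K) {n : ℕ} (l : List (Fin n)) (hl' : l.Nodup) :
    ∑ k ∈ Finset.range l.length, pl q n k (wd K l) = ∑ a, FreeAlgebra.ι K a * dw q l a := by
  induction l with
  | nil => simp [dw]
  | cons b l ih =>
    rw [List.nodup_cons] at hl'
    rw [List.length_cons, Finset.sum_range_succ']
    simp only [wd_cons, pl_succ]
    rw [← map_sum, ← Finset.mul_sum, ih hl'.2, Finset.mul_sum, map_sum]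
    simp only [hl_zero, pl, LinearMap.id_apply]
    have h0 := dw_not_mem q l b hl'.1
    have h1 : ∀ a : Fin n, (if a < b then q • (FreeAlgebra.ι K a * (FreeAlgebra.ι K b * dw q l a)) else
      FreeAlgebra.ι K a * (FreeAlgebra.ι K b * dw q l a) +
        (q - 1) • (FreeAlgebra.ι K b * (FreeAlgebra.ι K a * dw q l a))) =
      (if a = b then 0 else FreeAlgebra.ι K a * ((if a < b then q else 1) • (FreeAlgebra.ι K b * dw q l a)))
       + (if b < a then (q - 1) • (FreeAlgebra.ι K b * (FreeAlgebra.ι K a * dw q l a)) else 0) := by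
      intro a
      rcases lt_trichotomy a b with h | h | h
      · simp [h, h.ne, h.not_gt]
      · subst h; simp [h0]
      · simp [h, h.ne', h.not_gt]
    have h2 : ∀ a : Fin n, FreeAlgebra.ι K a * dw q (b :: l) a =
      (if a = b then 0 else FreeAlgebra.ι K a * ((if a < b then q else 1) • (FreeAlgebra.ι K b * dw q l a)))
       + (if a = b then FreeAlgebra.ι K b * (wd K l + (q - 1) •
          ∑ c ∈ Finset.univ.filter (fun c => b < c), FreeAlgebra.ι K c * dw q l c) else 0) := by
      intro a
      rw [dw]
      by_cases h : a = b
      · subst h; simp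
      · simp only [if_neg h, add_zero]
    rw [Finset.sum_congr rfl fun a _ => h1 a, Finset.sum_congr rfl fun a _ => h2 a,
      Finset.sum_add_distrib, Finset.sum_add_distrib, add_assoc]
    congr 1
    rw [Finset.sum_ite_eq', if_pos (Finset.mem_univ _), ← Finset.sum_filter, ← Finset.smul_sum,
      ← Finset.mul_sum, mul_add, mul_smul_comm, add_comm]

/-- weights on words -/
def xw {n : ℕ} (y : Fin n → K) : List (Fin n) → FreeAlgebra K (Fin n)
  | [] => 0
  | a :: w => y a • wd K (a :: w)

/-- weight operator -/
def xop {n : ℕ} (y : Fin n → K) : Module.End K (FreeAlgebra K (Fin n)) := (wb K n).constr K (xw y)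

lemma xop_wd {n : ℕ} (y : Fin n → K) (l : List (Fin n)) : xop y (wd K l) = xw y l := by
  rw [← wb_apply, xop, Module.Basis.constr_basis]

lemma xop_cons {n : ℕ} (y : Fin n → K) (b : Fin n) (u : FreeAlgebra K (Fin n)) :
    xop y (FreeAlgebra.ι K b * u) = y b • (FreeAlgebra.ι K b * u) := by
  have : xop y ∘ₗ (LinearMap.mulLeft K (FreeAlgebra.ι K b)) =
      y b • (LinearMap.mulLeft K (FreeAlgebra.ι K b)) := by
    apply ext_wd
    intro l
    simp only [LinearMap.comp_apply, LinearMap.mulLeft_apply, LinearMap.smul_apply]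
    rw [← wd_cons, xop_wd, xw]
  exact LinearMap.congr_fun this u

/-- word of a permutation -/
def pw (K : Type) [Field K] {n : ℕ} (π : Equiv.Perm (Fin n)) : FreeAlgebra K (Fin n) :=
  wd K (List.ofFn π)

/-- `M` represents `f` -/
def Rep {n : ℕ} (M : Matrix (Equiv.Perm (Fin n)) (Equiv.Perm (Fin n)) K)
    (f : Module.End K (FreeAlgebra K (Fin n))) : Prop :=
  ∀ π, ∑ σ, M π σ • pw K σ = f (pw K π)

lemma Rep.mul {n : ℕ} {M N : Matrix (Equiv.Perm (Fin n)) (Equiv.Perm (Fin n)) K}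
    {f g : Module.End K (FreeAlgebra K (Fin n))} (hM : Rep M f) (hN : Rep N g) :
    Rep (M * N) (g ∘ₗ f) := by
  intro π
  rw [LinearMap.comp_apply, ← hM π, map_sum]
  simp only [map_smul, ← hN _, Finset.smul_sum, Matrix.mul_apply, Finset.sum_smul, smul_smul]
  exact Finset.sum_comm

lemma Rep.sum {n : ℕ} (s : Finset ℕ) {M : ℕ → Matrix (Equiv.Perm (Fin n)) (Equiv.Perm (Fin n)) K}
    {f : ℕ → Module.End K (FreeAlgebra K (Fin n))} (h : ∀ i ∈ s, Rep (M i) (f i)) :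
    Rep (∑ i ∈ s, M i) (∑ i ∈ s, f i) := by
  intro π
  rw [LinearMap.sum_apply, ← Finset.sum_congr rfl (fun i hi => h i hi π)]
  simp only [Matrix.sum_apply, Finset.sum_smul]
  exact Finset.sum_comm

lemma hw_eq (q : K) {n : ℕ} (k : ℕ) (l : List (Fin n)) (h : k + 1 < l.length) :
    hw q k l = if l[k + 1] < l[k] then q • wd K ((l.set k l[k + 1]).set (k + 1) l[k]) else
      wd K ((l.set k l[k + 1]).set (k + 1) l[k]) + (q - 1) • wd K l := by
  induction k generalizing l with
  | zero =>
    match l, h with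
    | a :: b :: w, _ => simp [hw]
  | succ k ih =>
    match l, h with
    | a :: w, h =>
      have h' : k + 1 < w.length := by simpa using h
      rw [hw, ih w h']
      simp only [List.getElem_cons_succ, List.set_cons_succ, wd_cons]
      split_ifs <;> simp [mul_add]

lemma Rep_gen (q : K) {n : ℕ} (k : ℕ) (hk : k + 1 < n) : Rep (genMat n q k) (hl q n k) := by
  intro π
  rw [pw, hl_wd, hw_eq q k _ (by simpa using hk)]
  have e : ((List.ofFn π).set k (π ⟨k + 1, hk⟩)).set (k + 1) (π ⟨k, Nat.lt_of_succ_lt hk⟩) =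
      List.ofFn (π * Equiv.swap ⟨k, Nat.lt_of_succ_lt hk⟩ ⟨k + 1, hk⟩ : Equiv.Perm (Fin n)) := by
    apply List.ext_getElem
    · simp
    · intro i h1 h2
      simp only [List.getElem_set, List.getElem_ofFn, Equiv.Perm.mul_apply, Equiv.swap_apply_def,
        Fin.mk.injEq]
      have : i < n := by simpa using h2
      rcases eq_or_ne i k with rfl | h3
      · simp
      · rcases eq_or_ne i (k + 1) with rfl | h4
        · simp
        · simp [h3, h4, Ne.symm h3, Ne.symm h4]
  simp only [List.getElem_ofFn, e]
  simp only [genMat, dif_pos hk]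
  split_ifs with h
  · simp [ite_smul, pw]
  · simp [add_smul, ite_smul, Finset.sum_add_distrib, pw]

lemma Rep_prod (q : K) {n : ℕ} (k : ℕ) (hk : k < n) : Rep (prodGen n q k) (pl q n k) := by
  induction k with
  | zero => intro π; simp [prodGen, pl, Matrix.one_apply, ite_smul]
  | succ k ih => exact (Rep_gen q k hk).mul (ih (by omega))

lemma Rep_X (q : K) {n : ℕ} (hn : 0 < n) (x : Fin n → K) :
    Rep (XSn n q x) (xop fun a => x a / q ^ (n - 1 - (a : ℕ))) := by
  intro π
  obtain ⟨m, rfl⟩ : ∃ m, n = m + 1 := ⟨n - 1, by omega⟩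
  rw [pw, xop_wd, List.ofFn_succ, xw, ← List.ofFn_succ]
  simp [XSn, ite_smul, pw]

lemma Rep_T (q : K) {n : ℕ} (hn : 0 < n) (x : Fin n → K) :
    Rep (TSn n q x) (Top q fun a => x a / q ^ (n - 1 - (a : ℕ))) := by
  have h := (Rep.sum (Finset.range n) fun k hk =>
    Rep_prod q (n := n) k (Finset.mem_range.1 hk)).mul (Rep_X q hn x)
  intro π
  rw [TSn, h π, LinearMap.comp_apply, LinearMap.sum_apply]
  have := sum_pl q (List.ofFn π) (List.nodup_ofFn.2 π.injective)
  rw [List.length_ofFn] at this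
  rw [pw, this, Top_apply, map_sum]
  simp only [xop_cons, dq_wd]

/-- row vectors to words -/
def Phi (K : Type) [Field K] (n : ℕ) : (Equiv.Perm (Fin n) → K) →ₗ[K] FreeAlgebra K (Fin n) :=
  Fintype.linearCombination K (pw K)

lemma Phi_apply {n : ℕ} (v : Equiv.Perm (Fin n) → K) : Phi K n v = ∑ π, v π • pw K π := by
  simp [Phi, Fintype.linearCombination_apply]

lemma Phi_vecMul {n : ℕ} {M : Matrix (Equiv.Perm (Fin n)) (Equiv.Perm (Fin n)) K}
    {f : Module.End K (FreeAlgebra K (Fin n))} (h : Rep M f) (v : Equiv.Perm (Fin n) → K) :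
    Phi K n (Matrix.vecMul v M) = f (Phi K n v) := by
  rw [Phi_apply, Phi_apply, map_sum]
  simp only [map_smul, ← h _, Finset.smul_sum, Matrix.vecMul, dotProduct, Finset.sum_smul, smul_smul]
  exact Finset.sum_comm

lemma Phi_inj (n : ℕ) : Function.Injective (Phi K n) := by
  have : LinearIndependent K (pw K : Equiv.Perm (Fin n) → _) :=
    (wd_linInd n).comp _ (fun π σ h => Equiv.coe_fn_injective (List.ofFn_injective h))
  exact this.fintypeLinearCombination_injective

lemma Phi_surj {n : ℕ} {u : FreeAlgebra K (Fin n)} (hu : u ∈ WS K Finset.univ) :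
    ∃ v, Phi K n v = u := by
  have : WS K Finset.univ ≤ LinearMap.range (Phi K n) := by
    apply WS_induction
    intro l h1 h2
    have hlen : l.length = n := by
      rw [← List.toFinset_card_of_nodup h1, h2]; simp
    let g : Fin n → Fin n := fun i => l[i.1]'(by omega)
    have hg : Function.Injective g := by
      intro i j h
      exact Fin.ext ((List.Nodup.getElem_inj_iff h1).1 h)
    let π : Equiv.Perm (Fin n) := Equiv.ofBijective g (Finite.injective_iff_bijective.1 hg)
    refine ⟨Pi.single π 1, ?_⟩
    have hp : pw K π = wd K l := by
      rw [pw]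
      congr 1
      apply List.ext_getElem
      · simp [hlen]
      · intro i h3 h4
        simp [π, g]
    rw [Phi_apply, ← hp]
    simp [Pi.single_apply, ite_smul]
  exact this hu

lemma lambda_eq {q : K} (hq : q ≠ 0) {n : ℕ} (x : Fin n → K) (S : Finset (Fin n)) :
    lambdaS n q x S = mu q (fun a => x a / q ^ (n - 1 - (a : ℕ))) S := by
  rw [lambdaS, mu]
  refine Finset.sum_congr rfl fun a ha => ?_
  have h1 : (S.filter fun t => a ≤ t).card = (S.filter fun t => a < t).card + 1 := by
    rw [← Finset.card_insert_of_notMem (a := a) (s := S.filter fun t => a < t) (by simp)]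
    congr 1
    ext t
    simp only [Finset.mem_filter, Finset.mem_insert, le_iff_lt_or_eq]
    constructor
    · rintro ⟨h, h' | h'⟩
      exacts [Or.inr ⟨h, h'⟩, Or.inl h'.symm]
    · rintro (rfl | h)
      exacts [⟨ha, Or.inr rfl⟩, ⟨h.1, Or.inl h.2⟩]
  rw [h1]
  have h2 : (n : ℤ) - ((a : ℕ) + 1) - (((S.filter fun t => a < t).card + 1 : ℕ) : ℤ) + 1 =
     ((n - 1 - (a : ℕ) : ℕ) : ℤ) - ((S.filter fun t => a < t).card : ℤ) := by
    have := a.2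
    omega
  rw [h2, zpow_sub₀ hq, zpow_natCast, zpow_natCast]
  field_simp

lemma main_diag {q : K} (hq : q ≠ 0) {n : ℕ} (hn : 0 < n) (x : Fin n → K)
    (hx : Function.Injective (lambdaS n q x)) :
    Matrix.charpoly (TSn n q x) = (∏ S : Finset (Fin n),
        (Polynomial.X - Polynomial.C (lambdaS n q x S)) ^ (derangeNum (n - S.card)).toNat) ∧
      ∃ P D : Matrix (Equiv.Perm (Fin n)) (Equiv.Perm (Fin n)) K,
        IsUnit P.det ∧ D.IsDiag ∧ TSn n q x = P * D * P⁻¹ := by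
  set y : Fin n → K := fun a => x a / q ^ (n - 1 - (a : ℕ)) with hy
  have hmu : lambdaS n q x = mu q y := funext fun S => lambda_eq hq x S
  rw [hmu] at hx ⊢
  choose b hb1 hb2 using fun S : Finset (Fin n) => eigen_part q y (Finset.subset_univ S)
  choose c hc using fun (S : Finset (Fin n)) i => Phi_surj (hb2 S i).1
  have hli := sigma_linInd (Top q y) (fun S => mu q y S) hx
    (fun S => kap q (Finset.univ \ S)) b hb1 (fun S i => (hb2 S i).2)
  let I := (S : Finset (Fin n)) × Fin (kap q (Finset.univ \ S))
  have hlc : LinearIndependent K (fun p : I => c p.1 p.2) := by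
    apply LinearIndependent.of_comp (Phi K n)
    have hfun : (Phi K n) ∘ (fun p : I => c p.1 p.2) = fun p : I => b p.1 p.2 :=
      funext fun p => hc p.1 p.2
    rw [hfun]
    exact hli
  have hcard : Fintype.card I = Fintype.card (Equiv.Perm (Fin n)) := by
    rw [Fintype.card_sigma, Fintype.card_perm, Fintype.card_fin]
    simp only [Fintype.card_fin, kap_eq hq y hx]
    have := sum_numDer n Finset.univ
    rwa [Finset.powerset_univ, Finset.card_fin] at this
  let e : Equiv.Perm (Fin n) ≃ I := (Fintype.equivOfCardEq hcard).symm
  let Q : Matrix (Equiv.Perm (Fin n)) (Equiv.Perm (Fin n)) K := fun π => c (e π).1 (e π).2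
  let D : Matrix (Equiv.Perm (Fin n)) (Equiv.Perm (Fin n)) K :=
    Matrix.diagonal fun π => mu q y (e π).1
  have hQ : IsUnit Q := by
    rw [← Matrix.linearIndependent_rows_iff_isUnit]
    exact hlc.comp e e.injective
  have hQd : IsUnit Q.det := (Matrix.isUnit_iff_isUnit_det Q).1 hQ
  have hQT : Q * TSn n q x = D * Q := by
    ext π σ
    rw [Matrix.diagonal_mul]
    have : Matrix.vecMul (Q π) (TSn n q x) = mu q y (e π).1 • Q π := by
      apply Phi_inj n
      rw [Phi_vecMul (Rep_T q hn x), map_smul]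
      change Top q y (Phi K n (c _ _)) = mu q y (e π).1 • Phi K n (c _ _)
      rw [hc, (hb2 _ _).2]
    exact congrFun this σ
  have hT : TSn n q x = Q⁻¹ * D * Q := by
    rw [mul_assoc, ← hQT, ← mul_assoc, Matrix.nonsing_inv_mul _ hQd, one_mul]
  constructor
  · have h1 : Matrix.charpoly (TSn n q x) = Matrix.charpoly D := by
      obtain ⟨U, rfl'⟩ := hQ
      rw [hT, ← rfl', Matrix.charpoly_units_conj']
    rw [h1, Matrix.charpoly_diagonal, e.prod_comp (fun p : I => Polynomial.X - Polynomial.C (mu q y p.1)),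
      Fintype.prod_sigma]
    refine Finset.prod_congr rfl fun S _ => ?_
    change ∏ _i : Fin (kap q (Finset.univ \ S)), (Polynomial.X - Polynomial.C (mu q y S)) = _
    rw [Finset.prod_const, Finset.card_univ, Fintype.card_fin, kap_eq hq y hx, derangeNum_eq,
      Finset.card_sdiff_of_subset (Finset.subset_univ S), Finset.card_fin]
  · refine ⟨Q⁻¹, D, ?_, Matrix.isDiag_diagonal _, ?_⟩
    · exact (Matrix.isUnit_nonsing_inv_det_iff).2 hQd
    · rw [Matrix.nonsing_inv_nonsing_inv _ hQd, hT]

/-- coefficient of the eigenvalue -/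
def wS (q : K) {n : ℕ} (S : Finset (Fin n)) (a : Fin n) : K :=
  if a ∈ S then
    (q ^ ((n : ℤ) - ((a : ℕ) + 1) - ((S.filter fun t => a ≤ t).card : ℤ) + 1))⁻¹ else 0

lemma lambda_wS (q : K) {n : ℕ} (x : Fin n → K) (S : Finset (Fin n)) :
    lambdaS n q x S = ∑ a, x a * wS q S a := by
  simp [lambdaS, wS, Finset.sum_ite_mem, div_eq_mul_inv]

lemma bad_finite {q : K} (hq : q ≠ 0) {n : ℕ} (x : Fin n → K) (S T : Finset (Fin n)) (h : S ≠ T) :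
    {s : K | lambdaS n q (fun a => x a + s ^ ((a : ℕ) + 1)) S =
      lambdaS n q (fun a => x a + s ^ ((a : ℕ) + 1)) T}.Finite := by
  let p : Polynomial K := ∑ a : Fin n, (Polynomial.C (x a) + Polynomial.X ^ ((a : ℕ) + 1)) *
    Polynomial.C (wS q S a - wS q T a)
  have hp : p ≠ 0 := by
    obtain ⟨a, ha⟩ : ∃ a, wS q S a ≠ wS q T a := by
      by_contra hcon
      push Not at hcon
      apply h
      ext a
      have := hcon a
      unfold wS at this
      by_cases h1 : a ∈ S <;> by_cases h2 : a ∈ T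
      · simp [h1, h2]
      · rw [if_pos h1, if_neg h2] at this
        exact absurd this (inv_ne_zero (zpow_ne_zero _ hq))
      · rw [if_neg h1, if_pos h2] at this
        exact absurd this.symm (inv_ne_zero (zpow_ne_zero _ hq))
      · simp [h1, h2]
    intro h0
    have := congrArg (fun r => Polynomial.coeff r ((a : ℕ) + 1)) h0
    simp only [p, Polynomial.finset_sum_coeff, Polynomial.coeff_mul_C, Polynomial.coeff_add,
      Polynomial.coeff_C_succ, Polynomial.coeff_X_pow, Polynomial.coeff_zero, zero_add,
      add_left_inj, ite_mul, one_mul, zero_mul, Fin.val_inj, Finset.sum_ite_eq, Finset.mem_univ,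
      if_true] at this
    exact ha (sub_eq_zero.1 this)
  refine (p.rootSet_finite K).subset ?_
  intro s hs
  rw [Set.mem_ofPred_eq, lambda_wS, lambda_wS, ← sub_eq_zero, ← Finset.sum_sub_distrib] at hs
  rw [Polynomial.mem_rootSet]
  refine ⟨hp, ?_⟩
  rw [← hs]
  simp [p, Polynomial.eval_finset_sum, mul_sub]

lemma charpoly_all {q : ℂ} (hq : q ≠ 0) {n : ℕ} (hn : 0 < n) (x : Fin n → ℂ) :
    Matrix.charpoly (TSn n q x) = ∏ S : Finset (Fin n),
        (Polynomial.X - Polynomial.C (lambdaS n q x S)) ^ (derangeNum (n - S.card)).toNat := by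
  let xs : ℂ → Fin n → ℂ := fun s a => x a + s ^ ((a : ℕ) + 1)
  let bad : Set ℂ := ⋃ S : Finset (Fin n), ⋃ T : Finset (Fin n), ⋃ _ : S ≠ T,
    {s : ℂ | lambdaS n q (xs s) S = lambdaS n q (xs s) T}
  have hbad : bad.Finite := Set.finite_iUnion fun S => Set.finite_iUnion fun T =>
    Set.finite_iUnion fun h => bad_finite hq x S T h
  have hdense : Dense badᶜ := hbad.countable.dense_compl ℂ
  have h0 : xs 0 = x := by ext a; simp [xs]
  apply Polynomial.funext
  intro t
  have hxs : ∀ a, Continuous fun s => xs s a := fun a => by fun_prop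
  have key : (fun s => Polynomial.eval t (Matrix.charpoly (TSn n q (xs s)))) =
      fun s => Polynomial.eval t (∏ S : Finset (Fin n),
        (Polynomial.X - Polynomial.C (lambdaS n q (xs s) S)) ^ (derangeNum (n - S.card)).toNat) := by
    apply Continuous.ext_on hdense
    · simp only [Matrix.eval_charpoly]
      apply Continuous.matrix_det
      apply Continuous.sub continuous_const
      unfold TSn
      apply Continuous.matrix_mul continuous_const
      apply continuous_matrix
      intro π σ
      unfold XSn
      by_cases h : σ = π
      · simp only [if_pos h, dif_pos hn]
        exact (hxs _).div_const _
      · simp only [if_neg h]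
        exact continuous_const
    · simp only [Polynomial.eval_prod, Polynomial.eval_pow, Polynomial.eval_sub, Polynomial.eval_X,
        Polynomial.eval_C, lambda_wS]
      refine continuous_finset_prod _ fun S _ => Continuous.pow (Continuous.sub continuous_const ?_) _
      exact continuous_finset_sum _ fun a _ => (hxs a).mul continuous_const
    · intro s hs
      have hinj : Function.Injective (lambdaS n q (xs s)) := by
        intro S T hST
        by_contra hne
        apply hs
        simp only [bad, Set.mem_iUnion]
        exact ⟨S, T, hne, hST⟩
      simp only [(main_diag hq hn (xs s) hinj).1]
  have := congrFun key 0
  simpa only [h0] using this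

/-- For `n ≥ 1` and `q ≠ 0`, the characteristic polynomial of the
`n!×n!` transition matrix of `T_{S_n}(q,x)` is `∏_{S ⊆ [n]} (t - λ_S(q,x))^{d_{n-|S|}}`;
moreover, if the `λ_S(q,x)` are pairwise distinct then `T_{S_n}(q,x)` is diagonalizable. -/
theorem qTsetlin_perm_charpoly (n : ℕ) (hn : 1 ≤ n) (q : ℂ) (hq : q ≠ 0)
    (x : Fin n → ℂ) :
    (Matrix.charpoly (TSn n q x) =
      ∏ S : Finset (Fin n),
        (Polynomial.X - Polynomial.C (lambdaS n q x S)) ^ (derangeNum (n - S.card)).toNat) ∧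
    ((∀ S T : Finset (Fin n), lambdaS n q x S = lambdaS n q x T → S = T) →
      ∃ P D : Matrix (Equiv.Perm (Fin n)) (Equiv.Perm (Fin n)) ℂ,
        IsUnit P.det ∧ D.IsDiag ∧ TSn n q x = P * D * P⁻¹) := by
  exact ⟨charpoly_all hq hn x, fun h => (main_diag hq hn x (fun S T => h S T)).2⟩

end QTsetlin
end
end
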